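/- arXiv:2206.12860 — 2 statements merged into one kernel-verified Lean document; each statement's English description precedes it below -/
import Mathlib

section
/- The Mordell–Weil group X₀(15)(ℚ) of ℚ-rational points of the elliptic curve X₀(15) is isomorphic, as an abelian group, to (ℤ/2ℤ) × (ℤ/4ℤ). -/
/-- `X₀(15)`: the elliptic curve over `ℚ` with Cremona label 15A1, given by the Weierstrass
equation `y² + xy + y = x³ + x² − 10x − 10`. -/
def X015 : WeierstrassCurve ℚ := ⟨1, 1, 1, -10, -10⟩

/-! The quotient of `X₀(15)` by the subgroup generated by the point `(-13/4, 9/8)` of order `2` is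
the curve `E : Y² = X(X + 1)(X + 16)`. A rational point outside this subgroup is sent to a point
with square abscissa `X = q²`, so that `(q² + 1)(q² + 16)` is a square. These two factors are both
squares or both five times a square, and translation by the point `(4, 20)` of order `4` on `E`
turns the second case into the first. In the first case clearing denominators gives coprime
integers `a`, `b` for which `a² + b²` and `a² + 16b²` are squares, and an infinite descent on `|b|`
shows that `a` or `b` vanishes. This leaves `q = 0` and `q = ±2`, hence five abscissae on `X₀(15)`,
and every point above these is a combination of `(-1, 0)`, of order `2`, and `(-2, 3)`, of order
`4`. -/

/-! ### Coprime factorizations -/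

theorem exists_four_factors_of_mul_eq_mul {M : Type*} [CommMonoidWithZero M] [IsCancelMulZero M]
    [DecompositionMonoid M] {a b c d : M} (ha : a ≠ 0) (h : a * b = c * d) :
    ∃ p q r s : M, a = p * q ∧ b = r * s ∧ c = p * r ∧ d = q * s := by
  obtain ⟨p, q, ⟨r, rfl⟩, ⟨s, rfl⟩, rfl⟩ := exists_dvd_and_dvd_of_dvd_mul (Dvd.intro b h)
  exact ⟨p, q, r, s, rfl, mul_left_cancel₀ ha (by rw [h, mul_mul_mul_comm]), rfl, rfl⟩

theorem exists_unit_mul_of_isCoprime_of_mul_eq_mul {R : Type*} [CommRing R] {a b c d : R}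
    (hab : IsCoprime a b) (hcd : IsCoprime c d) (h : a * d = b * c) :
    ∃ u : Rˣ, c = u * a ∧ d = u * b := by
  obtain ⟨s, t, hst⟩ := hab
  have hc : c = (c * s + d * t) * a := by linear_combination -c * hst - t * h
  have hd : d = (c * s + d * t) * b := by linear_combination -d * hst + s * h
  obtain ⟨u, hu⟩ : IsUnit (c * s + d * t) :=
    hcd.isUnit_of_dvd' (Dvd.intro _ hc.symm) (Dvd.intro _ hd.symm)
  exact ⟨u, by rwa [hu], by rwa [hu]⟩

theorem isCoprime_of_mul_eq_squarefree_mul_sq {R : Type*} [CommRing R] [IsBezout R]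
    {a b c n : R} (hn : Squarefree n) (h : a * b = n * c ^ 2) (hc : IsCoprime (a + b) c) :
    IsCoprime a b := by
  refine IsRelPrime.isCoprime fun z ha hb ↦ ?_
  have hzc : IsCoprime z c := hc.of_isCoprime_of_dvd_left (dvd_add ha hb)
  have hzn : z * z ∣ n * c ^ 2 := h ▸ mul_dvd_mul ha hb
  exact hn z ((hzc.mul_left hzc).pow_right.dvd_of_dvd_mul_right hzn)

theorem exists_eq_sq_of_isCoprime_of_mul_eq_sq {a b c : ℤ} (hab : IsCoprime a b) (ha : 0 ≤ a)
    (h : a * b = c ^ 2) : ∃ x : ℤ, a = x ^ 2 := by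
  obtain ⟨x, hx | hx⟩ := Int.sq_of_isCoprime hab h
  · exact ⟨x, hx⟩
  · exact ⟨x, by linarith [sq_nonneg x]⟩

theorem exists_eq_mul_sq_of_isCoprime_of_mul_eq_mul_sq {a b c n : ℤ} (hab : IsCoprime a b)
    (ha : 0 < a) (hb : 0 < b) (hn : 0 < n) (h : a * b = n * c ^ 2) :
    ∃ d e x y : ℤ, 0 < d ∧ 0 < e ∧ d * e = n ∧ a = d * x ^ 2 ∧ b = e * y ^ 2 ∧ x * y = c := by
  obtain ⟨d, e, hd, he, hde, ⟨a', rfl⟩, ⟨b', rfl⟩⟩ :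
      ∃ d e : ℤ, 0 < d ∧ 0 < e ∧ d * e = n ∧ d ∣ a ∧ e ∣ b := by
    obtain ⟨d, e, hda, heb, rfl⟩ := exists_dvd_and_dvd_of_dvd_mul (Dvd.intro _ h.symm)
    exact ⟨|d|, |e|, abs_pos.2 (left_ne_zero_of_mul hn.ne'),
      abs_pos.2 (right_ne_zero_of_mul hn.ne'), by rw [← abs_mul, abs_of_pos hn],
      (abs_dvd d a).2 hda, (abs_dvd e b).2 heb⟩
  have hab' : IsCoprime a' b' := hab.of_mul_left_right.of_mul_right_right
  have h' : a' * b' = c ^ 2 := mul_left_cancel₀ hn.ne' (by rw [← h, ← hde, mul_mul_mul_comm])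
  obtain ⟨x, rfl⟩ := exists_eq_sq_of_isCoprime_of_mul_eq_sq hab'
    (pos_of_mul_pos_right ha hd.le).le h'
  obtain ⟨y, rfl⟩ := exists_eq_sq_of_isCoprime_of_mul_eq_sq hab'.symm
    (pos_of_mul_pos_right hb he.le).le (by rw [mul_comm, h'])
  rcases sq_eq_sq_iff_eq_or_eq_neg.1 ((mul_pow x y 2).trans h') with hxy | hxy
  · exact ⟨d, e, x, y, hd, he, hde, rfl, rfl, hxy⟩
  · exact ⟨d, e, x, -y, hd, he, hde, rfl, by rw [neg_sq], by rw [mul_neg, hxy, neg_neg]⟩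

theorem exists_eq_gcd_mul_sq_of_mul_eq_sq {a b c : ℤ} (ha : 0 < a) (h : a * b = c ^ 2) :
    ∃ x y : ℤ, a = a.gcd b * x ^ 2 ∧ b = a.gcd b * y ^ 2 := by
  have hg : 0 < a.gcd b := Int.gcd_pos_of_ne_zero_left b ha.ne'
  obtain ⟨e, rfl⟩ : (a.gcd b : ℤ) ∣ c := by
    rw [← Int.pow_dvd_pow_iff two_ne_zero, ← h, sq]
    exact mul_dvd_mul (Int.gcd_dvd_left a b) (Int.gcd_dvd_right a b)
  obtain ⟨a', b', hab', ha', hb'⟩ := Int.exists_gcd_one hg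
  generalize a.gcd b = g at *
  subst ha' hb'
  have h' : a' * b' = e ^ 2 :=
    mul_left_cancel₀ (pow_ne_zero 2 (Int.natCast_ne_zero.2 hg.ne')) (by linear_combination h)
  rw [← Int.isCoprime_iff_gcd_eq_one] at hab'
  have ha₀ : 0 < a' := pos_of_mul_pos_left ha (Int.natCast_nonneg g)
  have hb₀ : 0 ≤ b' := nonneg_of_mul_nonneg_right (h' ▸ sq_nonneg e) ha₀
  obtain ⟨x, rfl⟩ := exists_eq_sq_of_isCoprime_of_mul_eq_sq hab' ha₀.le h'
  obtain ⟨y, rfl⟩ := exists_eq_sq_of_isCoprime_of_mul_eq_sq hab'.symm hb₀ (by rw [mul_comm, h'])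
  exact ⟨x, y, mul_comm _ _, mul_comm _ _⟩

/-! ### Concordant forms -/

/-- `(x, y)` represents squares by both of Euler's concordant forms `X² + Y²` and `X² + 16Y²`.
For `y ≠ 0` this says that `(x / y)²` is the abscissa of a point of `2E(ℚ)` on the curve
`E : Y² = X(X + 1)(X + 16)`. -/
def IsConcordant {R : Type*} [Semiring R] (x y : R) : Prop :=
  IsSquare (x ^ 2 + y ^ 2) ∧ IsSquare (x ^ 2 + 16 * y ^ 2)

theorem IsConcordant.exists_pythagorean_parameters {a b : ℤ} (h : IsConcordant a b)
    (hab : IsCoprime a b) (ha : Odd a) :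
    ∃ m l : ℤ, IsCoprime m l ∧ Odd m ∧ b = 2 * (m * l) ∧ a ^ 2 = (m ^ 2 - 16 * l ^ 2) ^ 2 := by
  obtain ⟨⟨z, hz⟩, ⟨w, hw⟩⟩ := h
  have isCoprime_four {u : ℤ} (hu : Odd u) : IsCoprime u 4 :=
    (Int.isCoprime_two_right.2 hu).pow_right (n := 2)
  have ha2 : a % 2 = 1 := Int.odd_iff.1 ha
  have hb2 : b % 2 = 0 := by
    have hparity := PythagoreanTriple.even_odd_of_coprime
      (show a * a + b * b = z * z by linarith) (Int.isCoprime_iff_gcd_eq_one.1 hab)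
    omega
  have four_dvd {u v : ℤ} (hu : Odd u) (huv : 2 * b = u * v) : 4 ∣ v :=
    (isCoprime_four hu).symm.dvd_of_dvd_mul_left (by rw [← huv]; omega)
  obtain ⟨m, n, (⟨ham, hbmn⟩ | ⟨ham, -⟩), -, hmn, hparity⟩ :=
    PythagoreanTriple.coprime_classification.1
      ⟨show a * a + 4 * b * (4 * b) = w * w by linarith,
        Int.isCoprime_iff_gcd_eq_one.1 ((isCoprime_four ha).mul_right hab)⟩
  · rw [← Int.isCoprime_iff_gcd_eq_one] at hmn
    rcases hparity with ⟨-, hn⟩ | ⟨hm, -⟩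
    · obtain ⟨l, rfl⟩ := four_dvd (v := m) (Int.odd_iff.2 hn) (by linarith)
      exact ⟨n, l, hmn.symm.of_mul_right_right, Int.odd_iff.2 hn, by linarith, by rw [ham]; ring⟩
    · obtain ⟨l, rfl⟩ := four_dvd (v := n) (Int.odd_iff.2 hm) (by linarith)
      exact ⟨m, l, hmn.of_mul_right_right, Int.odd_iff.2 hm, by linarith, by rw [ham]; ring⟩
  · rw [mul_assoc] at ham
    omega

theorem exists_isCoprime_roots_of_discrim_eq_sq {m l z : ℤ} (hml : IsCoprime m l) (hm : Odd m)
    (hl : l ≠ 0) (h : (m ^ 2 + 16 * l ^ 2) ^ 2 - 60 * (m * l) ^ 2 = z ^ 2) :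
    ∃ A B : ℤ, 0 < A ∧ 0 < B ∧ IsCoprime A B ∧ A + B = m ^ 2 + 16 * l ^ 2 ∧
      A * B = 15 * (m * l) ^ 2 := by
  have hm0 : m ≠ 0 := by rintro rfl; simp at hm
  have hs : Odd (m ^ 2 + 16 * l ^ 2) := hm.pow.add_even ((by decide : Even (16 : ℤ)).mul_right _)
  have hz : Odd z := by
    have : Odd (z ^ 2) := h ▸ hs.pow.sub_even ((by decide : Even (60 : ℤ)).mul_right _)
    exact Int.odd_pow.1 this |>.resolve_right two_ne_zero
  obtain ⟨A, hA⟩ := (hs.sub_odd hz).two_dvd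
  obtain ⟨B, hB⟩ := (hs.add_odd hz).two_dvd
  have hsum : A + B = m ^ 2 + 16 * l ^ 2 := by linarith
  have hprod : A * B = 15 * (m * l) ^ 2 := by
    refine mul_left_cancel₀ (four_ne_zero (α := ℤ)) ?_
    linear_combination h - 2 * A * hB - (m ^ 2 + 16 * l ^ 2 + z) * hA
  have hsum_pos : 0 < A + B := by rw [hsum]; positivity
  have hprod_pos : 0 < A * B := by rw [hprod]; positivity
  have hA0 : 0 < A := by nlinarith [hsum_pos, hprod_pos]
  have hB0 : 0 < B := pos_of_mul_pos_right hprod_pos hA0.le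
  have h15 : Squarefree (15 : ℤ) := Int.squarefree_natCast.2
    ((Nat.squarefree_mul (by norm_num : Nat.Coprime 3 5)).2
      ⟨Nat.prime_three.prime.squarefree, Nat.prime_five.prime.squarefree⟩)
  have hm16 : IsCoprime m 16 := (Int.isCoprime_two_right.2 hm).pow_right (n := 4)
  have hsum_m : IsCoprime (m ^ 2 + 16 * l ^ 2) m := by
    rw [sq m]
    exact ((hm16.mul_right hml.pow_right).symm).mul_add_left_left m
  have hsum_l : IsCoprime (m ^ 2 + 16 * l ^ 2) l := by
    rw [sq l, mul_left_comm]
    exact hml.pow_left.add_mul_left_left _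
  exact ⟨A, B, hA0, hB0, isCoprime_of_mul_eq_squarefree_mul_sq h15 hprod
    (hsum ▸ hsum_m.mul_right hsum_l), hsum, hprod⟩

theorem exists_unit_sq_eq_mul_of_mul_sq_add_mul_sq {R : Type*} [CommRing R] {d e k p q r s : R}
    (hk : d * e + 1 = k) (hps : IsCoprime p s) (hqr : IsCoprime q r)
    (h : d * (p * q) ^ 2 + e * (r * s) ^ 2 = (p * r) ^ 2 + k * (q * s) ^ 2) :
    ∃ ε : Rˣ, q ^ 2 = ε * (p ^ 2 - e * s ^ 2) ∧ r ^ 2 = ε * (d * p ^ 2 - k * s ^ 2) := by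
  subst hk
  -- The matrix `(k, -e; d, -1)` has determinant `-1`, so it maps `(q², r²)` to a coprime pair; `h`
  -- says that this pair is proportional to `(p², s²)`.
  have himage : IsCoprime ((d * e + 1) * q ^ 2 - e * r ^ 2) (d * q ^ 2 - r ^ 2) := by
    obtain ⟨u, v, huv⟩ := hqr.pow (m := 2) (n := 2)
    exact ⟨u + v * d, -(u * e + v * (d * e + 1)), by linear_combination huv⟩
  obtain ⟨ε, h₁, h₂⟩ := exists_unit_mul_of_isCoprime_of_mul_eq_mul
    (hps.pow (m := 2) (n := 2)) himage (by linear_combination h)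
  exact ⟨ε, by linear_combination h₁ - e * h₂, by linear_combination d * h₁ - (d * e + 1) * h₂⟩

theorem exists_isConcordant_of_mul_sq_add_mul_sq {m l d e x y : ℤ} (hm : Odd m) (hl : l ≠ 0)
    (hd : 0 < d) (he : 0 < e) (hde : d * e = 15) (hxy : IsCoprime x y) (hmul : x * y = m * l)
    (hadd : d * x ^ 2 + e * y ^ 2 = m ^ 2 + 16 * l ^ 2) :
    ∃ a b : ℤ, IsConcordant a b ∧ IsCoprime a b ∧ Odd a ∧ b ≠ 0 ∧ b ∣ l := by
  have hm0 : m ≠ 0 := by rintro rfl; simp at hm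
  have hx : x ≠ 0 := left_ne_zero_of_mul (hmul ▸ mul_ne_zero hm0 hl)
  obtain ⟨p, q, r, s, rfl, rfl, rfl, rfl⟩ := exists_four_factors_of_mul_eq_mul hx hmul
  obtain ⟨hp, hr⟩ := Int.odd_mul.1 hm
  have hps : IsCoprime p s := hxy.of_mul_left_left.of_mul_right_right
  have hqr : IsCoprime q r := hxy.of_mul_left_right.of_mul_right_left
  obtain ⟨ε, hq_eq, hr_eq⟩ := exists_unit_sq_eq_mul_of_mul_sq_add_mul_sq
    (show d * e + 1 = 16 by rw [hde]; norm_num) hps hqr hadd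
  have hd_le : d ≤ 15 := hde ▸ le_mul_of_one_le_right hd.le he
  have hp8 := Int.eight_dvd_sq_sub_one_of_odd hp
  have hr8 := Int.eight_dvd_sq_sub_one_of_odd hr
  rcases Int.units_eq_one_or ε with rfl | rfl
  · rw [Units.val_one, one_mul] at hr_eq hq_eq
    obtain ⟨rfl, rfl⟩ : d = 1 ∧ e = 15 := by interval_cases d <;> omega
    have hrs : IsCoprime r s := by
      refine (IsCoprime.pow_left_iff two_pos).1 ?_
      rw [show r ^ 2 = p ^ 2 + s * (-16 * s) by linarith]
      exact hps.pow_left.add_mul_left_left _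
    exact ⟨r, s, ⟨⟨q, by linarith⟩, ⟨p, by linarith⟩⟩, hrs, hr, right_ne_zero_of_mul hl,
      Dvd.intro_left q rfl⟩
  · rw [Units.val_neg, Units.val_one, neg_one_mul] at hr_eq hq_eq
    obtain ⟨rfl, rfl⟩ : d = 15 ∧ e = 1 := by interval_cases d <;> omega
    have hpq : IsCoprime p q := by
      refine (IsCoprime.pow_right_iff two_pos).1 ?_
      rw [show q ^ 2 = s ^ 2 + p * -p by linarith]
      exact hps.pow_right.add_mul_left_right _
    exact ⟨p, q, ⟨⟨s, by linarith⟩, ⟨r, by linarith⟩⟩, hpq, hp, left_ne_zero_of_mul hl,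
      Dvd.intro s rfl⟩

theorem IsConcordant.exists_natAbs_lt {a b : ℤ} (h : IsConcordant a b) (hab : IsCoprime a b)
    (ha : Odd a) (hb : b ≠ 0) :
    ∃ a' b' : ℤ, IsConcordant a' b' ∧ IsCoprime a' b' ∧ Odd a' ∧ b' ≠ 0 ∧
      b'.natAbs < b.natAbs := by
  obtain ⟨m, l, hml, hm, rfl, hasq⟩ := h.exists_pythagorean_parameters hab ha
  obtain ⟨⟨z, hz⟩, -⟩ := h
  have hml0 : m * l ≠ 0 := right_ne_zero_of_mul hb
  have hl : l ≠ 0 := right_ne_zero_of_mul hml0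
  obtain ⟨A, B, hA, hB, hAB, hsum, hprod⟩ :=
    exists_isCoprime_roots_of_discrim_eq_sq (z := z) hml hm hl (by linear_combination hz - hasq)
  obtain ⟨d, e, x, y, hd, he, hde, rfl, rfl, hxy⟩ :=
    exists_eq_mul_sq_of_isCoprime_of_mul_eq_mul_sq hAB hA hB (by norm_num) hprod
  have hxy_coprime : IsCoprime x y :=
    (IsCoprime.pow_iff two_pos two_pos).1 hAB.of_mul_left_right.of_mul_right_right
  obtain ⟨a', b', h', hab', ha', hb', hdvd⟩ :=
    exists_isConcordant_of_mul_sq_add_mul_sq hm hl hd he hde hxy_coprime hxy hsum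
  refine ⟨a', b', h', hab', ha', hb', ?_⟩
  have hle : b'.natAbs ≤ (m * l).natAbs :=
    Int.natAbs_le_of_dvd_ne_zero (hdvd.mul_left m) hml0
  omega

theorem IsConcordant.eq_zero_of_odd {a b : ℤ} (h : IsConcordant a b) (hab : IsCoprime a b)
    (ha : Odd a) : b = 0 := by
  induction hn : b.natAbs using Nat.strong_induction_on generalizing a b with
  | _ n ih =>
    by_contra hb
    obtain ⟨a', b', h', hab', ha', hb', hlt⟩ := h.exists_natAbs_lt hab ha hb
    exact hb' (ih _ (hn ▸ hlt) h' hab' ha' rfl)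

theorem IsConcordant.exists_eq_four_mul {a b : ℤ} (h : IsConcordant a b) (ha : Even a)
    (hb : Odd b) : ∃ k : ℤ, a = 4 * k ∧ IsConcordant b k := by
  obtain ⟨⟨z, hz⟩, ⟨w, hw⟩⟩ := h
  obtain ⟨c, rfl⟩ := ha.two_dvd
  have hz_odd : Odd z := by
    have : Odd (z * z) := hz ▸ (ha.pow_of_ne_zero two_ne_zero).add_odd hb.pow
    exact (Int.odd_mul.1 this).1
  have hz_eq : 4 * c ^ 2 = z ^ 2 - b ^ 2 := by linarith
  have hb8 := Int.eight_dvd_sq_sub_one_of_odd hb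
  have hz8 := Int.eight_dvd_sq_sub_one_of_odd hz_odd
  obtain ⟨k, rfl⟩ : 2 ∣ c := Int.prime_two.dvd_of_dvd_pow (show 2 ∣ c ^ 2 by omega)
  obtain ⟨v, rfl⟩ : 4 ∣ w := by
    have hw16 : 4 ^ 2 ∣ w ^ 2 := ⟨k ^ 2 + b ^ 2, by linarith⟩
    exact (Int.pow_dvd_pow_iff two_ne_zero).1 hw16
  exact ⟨k, by ring, ⟨v, by linarith⟩, ⟨z, by linarith⟩⟩

theorem IsConcordant.eq_zero_or_eq_zero {a b : ℤ} (h : IsConcordant a b) (hab : IsCoprime a b) :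
    a = 0 ∨ b = 0 := by
  rcases Int.even_or_odd a with ha | ha
  · have hb : Odd b := Int.isCoprime_two_left.1 (hab.of_isCoprime_of_dvd_left ha.two_dvd)
    obtain ⟨k, rfl, hbk⟩ := h.exists_eq_four_mul ha hb
    have hk : k = 0 := hbk.eq_zero_of_odd hab.of_mul_left_right.symm hb
    exact Or.inl (by rw [hk, mul_zero])
  · exact Or.inr (h.eq_zero_of_odd hab ha)

theorem isConcordant_mul_right_iff {K : Type*} [Field K] {x y c : K} (hc : c ≠ 0) :
    IsConcordant (x * c) (y * c) ↔ IsConcordant x y := by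
  have isSquare_mul_sq_iff (u : K) : IsSquare (u * c ^ 2) ↔ IsSquare u := by
    refine ⟨fun h ↦ ?_, fun h ↦ h.mul (IsSquare.sq c)⟩
    simpa [hc] using h.div (IsSquare.sq c)
  simp only [IsConcordant, mul_pow, ← mul_assoc, ← add_mul, isSquare_mul_sq_iff]

theorem isConcordant_intCast_iff {a b : ℤ} : IsConcordant (a : ℚ) b ↔ IsConcordant a b := by
  simp only [IsConcordant, ← Rat.isSquare_intCast_iff (z := _ ^ 2 + _), Int.cast_add, Int.cast_mul,
    Int.cast_pow, Int.cast_ofNat]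

theorem isConcordant_num_den_iff {q : ℚ} :
    IsConcordant q.num (q.den : ℤ) ↔ IsConcordant q 1 := by
  rw [← isConcordant_intCast_iff, Int.cast_natCast, ← Rat.mul_den_eq_num,
    ← isConcordant_mul_right_iff (x := q) (Nat.cast_ne_zero.2 q.den_ne_zero), one_mul]

theorem IsConcordant.eq_zero {q : ℚ} (h : IsConcordant q 1) : q = 0 := by
  rcases (isConcordant_num_den_iff.2 h).eq_zero_or_eq_zero (Rat.isCoprime_num_den q) with
    hnum | hden
  · exact Rat.num_eq_zero.1 hnum
  · exact absurd hden (Int.natCast_ne_zero.2 q.den_ne_zero)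

/-! ### Rational points on `z² = (q² + 1)(q² + 16)` -/

theorem not_three_dvd_sq_add_sq {a b : ℤ} (hab : IsCoprime a b) : ¬ 3 ∣ a ^ 2 + b ^ 2 := by
  intro h
  have hsq := ZMod.isSquare_neg_one_of_dvd (Int.natAbs_dvd_natAbs.2 h)
    (ZMod.isSquare_neg_one_of_eq_sq_add_sq_of_isCoprime rfl hab)
  exact absurd hsq (by decide)

theorem gcd_sq_add_sq_eq_one_or_five {a b : ℤ} (hab : IsCoprime a b) :
    (a ^ 2 + b ^ 2).gcd (a ^ 2 + 16 * b ^ 2) = 1 ∨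
      (a ^ 2 + b ^ 2).gcd (a ^ 2 + 16 * b ^ 2) = 5 := by
  set g := (a ^ 2 + b ^ 2).gcd (a ^ 2 + 16 * b ^ 2)
  have hg₁ : (g : ℤ) ∣ a ^ 2 + b ^ 2 := Int.gcd_dvd_left _ _
  have hg₂ : (g : ℤ) ∣ a ^ 2 + 16 * b ^ 2 := Int.gcd_dvd_right _ _
  have hg15 : (g : ℤ) ∣ 15 := by
    obtain ⟨u, v, huv⟩ := hab.pow (m := 2) (n := 2)
    have : (15 : ℤ) = (16 * u - v) * (a ^ 2 + b ^ 2) + (v - u) * (a ^ 2 + 16 * b ^ 2) := by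
      linear_combination -15 * huv
    rw [this]
    exact dvd_add (hg₁.mul_left _) (hg₂.mul_left _)
  have hg3 : ¬ 3 ∣ g := fun h ↦
    not_three_dvd_sq_add_sq hab ((Int.natCast_dvd_natCast.2 h).trans hg₁)
  have hdvd : g ∈ Nat.divisors 15 := Nat.mem_divisors.2 ⟨by exact_mod_cast hg15, by norm_num⟩
  rw [show Nat.divisors 15 = {1, 3, 5, 15} from by decide] at hdvd
  simp only [Finset.mem_insert, Finset.mem_singleton] at hdvd
  omega

theorem isConcordant_or_exists_eq_five_mul_sq_int {a b c : ℤ} (hab : IsCoprime a b)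
    (h : (a ^ 2 + b ^ 2) * (a ^ 2 + 16 * b ^ 2) = c ^ 2) :
    IsConcordant a b ∨ ∃ s t : ℤ, a ^ 2 + b ^ 2 = 5 * s ^ 2 ∧ a ^ 2 + 16 * b ^ 2 = 5 * t ^ 2 := by
  have hpos : 0 < a ^ 2 + b ^ 2 := hab.sq_add_sq_ne_zero.symm.lt_of_le (by positivity)
  obtain ⟨s, t, hs, ht⟩ := exists_eq_gcd_mul_sq_of_mul_eq_sq hpos h
  rcases gcd_sq_add_sq_eq_one_or_five hab with hg | hg <;> rw [hg] at hs ht <;> push_cast at hs ht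
  · exact Or.inl ⟨⟨s, by linarith⟩, ⟨t, by linarith⟩⟩
  · exact Or.inr ⟨s, t, hs, ht⟩

theorem isConcordant_or_exists_eq_five_mul_sq {q z : ℚ} (h : (q ^ 2 + 1) * (q ^ 2 + 16) = z ^ 2) :
    IsConcordant q 1 ∨ ∃ s t : ℚ, q ^ 2 + 1 = 5 * s ^ 2 ∧ q ^ 2 + 16 = 5 * t ^ 2 := by
  have hd : (q.den : ℚ) ≠ 0 := Nat.cast_ne_zero.2 q.den_ne_zero
  have hq : (q.num : ℚ) = q * q.den := (Rat.mul_den_eq_num q).symm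
  obtain ⟨c, hc⟩ : IsSquare ((q.num ^ 2 + (q.den : ℤ) ^ 2) *
      (q.num ^ 2 + 16 * (q.den : ℤ) ^ 2)) := by
    refine Rat.isSquare_intCast_iff.1 ⟨z * q.den ^ 2, ?_⟩
    push_cast
    rw [hq]
    linear_combination (q.den : ℚ) ^ 4 * h
  rcases isConcordant_or_exists_eq_five_mul_sq_int (Rat.isCoprime_num_den q)
    (hc.trans (sq c).symm) with hconc | ⟨s, t, hs, ht⟩
  · exact Or.inl (isConcordant_num_den_iff.1 hconc)
  · have hsQ : (q * q.den) ^ 2 + (q.den : ℚ) ^ 2 = 5 * (s : ℚ) ^ 2 := by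
      rw [← hq]; exact_mod_cast hs
    have htQ : (q * q.den) ^ 2 + 16 * (q.den : ℚ) ^ 2 = 5 * (t : ℚ) ^ 2 := by
      rw [← hq]; exact_mod_cast ht
    refine Or.inr ⟨s / q.den, t / q.den, ?_, ?_⟩ <;> field_simp <;> linarith

/-- With `X = q²`, this is translation by the point `(4, 20)` of order `4` on the curve
`Y² = X(X + 1)(X + 16)`: the triples `(4, 5, 20)` and `(q², q² + 1, q² + 16)` agree modulo
squares, so the sum of the two points lies in the image of duplication. -/
theorem isConcordant_of_eq_five_mul_sq {q s t : ℚ} (hs : q ^ 2 + 1 = 5 * s ^ 2)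
    (ht : q ^ 2 + 16 = 5 * t ^ 2) (hq : q ^ 2 ≠ 4) :
    IsConcordant (10 * (q - s * t) / (q ^ 2 - 4)) 1 := by
  have hq' : q ^ 2 - 4 ≠ 0 := sub_ne_zero.2 hq
  refine ⟨⟨5 * (4 * s - q * t) / (q ^ 2 - 4), ?_⟩, ⟨10 * (t - q * s) / (q ^ 2 - 4), ?_⟩⟩
  · field_simp
    linear_combination (16 - 4 * q ^ 2) * hs + (5 * q ^ 2 - 20 * s ^ 2) * ht
  · field_simp
    linear_combination (16 * q ^ 2 - 64) * hs + (20 - 20 * s ^ 2) * ht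

theorem eq_zero_or_sq_eq_four_of_mul_eq_sq {q z : ℚ}
    (h : (q ^ 2 + 1) * (q ^ 2 + 16) = z ^ 2) : q = 0 ∨ q ^ 2 = 4 := by
  rcases isConcordant_or_exists_eq_five_mul_sq h with hconc | ⟨s, t, hs, ht⟩
  · exact Or.inl hconc.eq_zero
  · refine Or.inr (by_contra fun hq ↦ ?_)
    have hq' : q ^ 2 - 4 ≠ 0 := sub_ne_zero.2 hq
    have hr := (isConcordant_of_eq_five_mul_sq hs ht hq).eq_zero
    have hqst : q - s * t = 0 := by simpa [hq'] using hr
    have hsq : (q ^ 2 - 4) ^ 2 = 0 := by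
      linear_combination (q ^ 2 + 16) * hs + 5 * s ^ 2 * ht - 25 * (q + s * t) * hqst
    exact hq' (pow_eq_zero_iff two_ne_zero |>.1 hsq)

/-! ### Rational points on `X₀(15)` -/

theorem disjoint_zmultiples_of_notMem {A : Type*} [AddGroup A] {a : A} {H : AddSubgroup A}
    (hp : (addOrderOf a).Prime) (ha : a ∉ H) : Disjoint (AddSubgroup.zmultiples a) H := by
  have : Fact (Nat.card (AddSubgroup.zmultiples a)).Prime := ⟨by rwa [Nat.card_zmultiples]⟩
  rcases (H.addSubgroupOf (AddSubgroup.zmultiples a)).eq_bot_or_eq_top_of_prime_card with h | h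
  · exact (AddSubgroup.addSubgroupOf_eq_bot.1 h).symm
  · exact absurd (AddSubgroup.zmultiples_le.1 (AddSubgroup.addSubgroupOf_eq_top.1 h)) ha

theorem nonempty_addEquiv_zmod_prod_zmod {A : Type*} [AddCommGroup A] {a b : A}
    (hdisj : Disjoint (AddSubgroup.zmultiples a) (AddSubgroup.zmultiples b))
    (htop : AddSubgroup.zmultiples a ⊔ AddSubgroup.zmultiples b = ⊤) :
    Nonempty (A ≃+ ZMod (addOrderOf a) × ZMod (addOrderOf b)) := by
  let toMultiples (c : A) : ZMod (addOrderOf c) →+ A :=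
    ZMod.lift (addOrderOf c) ⟨zmultiplesHom A c, by simp⟩
  have toMultiples_intCast (c : A) (k : ℤ) : toMultiples c k = k • c := ZMod.lift_coe _ _ k
  have toMultiples_injective (c : A) : Function.Injective (toMultiples c) :=
    (ZMod.lift_injective _).2 fun k hk ↦
      (ZMod.intCast_zmod_eq_zero_iff_dvd k _).2 (addOrderOf_dvd_iff_zsmul_eq_zero.2 hk)
  refine ⟨(AddEquiv.ofBijective ((toMultiples a).coprod (toMultiples b)) ⟨?_, fun x ↦ ?_⟩).symm⟩
  · refine (injective_iff_map_eq_zero _).2 fun ⟨i, j⟩ hij ↦ ?_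
    obtain ⟨i, rfl⟩ := ZMod.intCast_surjective i
    obtain ⟨j, rfl⟩ := ZMod.intCast_surjective j
    have hij' : i • a + j • b = 0 := by simpa [toMultiples_intCast] using hij
    have ha : i • a = 0 := AddSubgroup.disjoint_def.1 hdisj ⟨i, rfl⟩
      ⟨-j, by rw [eq_neg_of_add_eq_zero_left hij']; exact neg_zsmul b j⟩
    have hb : j • b = 0 := by rwa [ha, zero_add] at hij'
    exact Prod.ext (toMultiples_injective a (by simpa [toMultiples_intCast] using ha))
      (toMultiples_injective b (by simpa [toMultiples_intCast] using hb))
  · obtain ⟨_, ⟨i, rfl⟩, _, ⟨j, rfl⟩, rfl⟩ :=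
      AddSubgroup.mem_sup.1 (htop ▸ AddSubgroup.mem_top x)
    exact ⟨(i, j), by simp [toMultiples_intCast]⟩

open WeierstrassCurve.Affine in
theorem some_mem_of_some_mem {F : Type*} [Field F] [DecidableEq F] {W : WeierstrassCurve.Affine F}
    {H : AddSubgroup W.Point} {x y₁ y₂ : F} {h₁ : W.Nonsingular x y₁} {h₂ : W.Nonsingular x y₂}
    (h : Point.some x y₁ h₁ ∈ H) : Point.some x y₂ h₂ ∈ H := by
  rcases (Point.X_eq_iff (h₁ := h₂) (h₂ := h₁)).1 rfl with heq | heq <;> rw [heq]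
  exacts [h, H.neg_mem h]

namespace X015

open WeierstrassCurve.Affine

theorem equation_iff {x y : ℚ} :
    X015.toAffine.Equation x y ↔ y ^ 2 + x * y + y = x ^ 3 + x ^ 2 - 10 * x - 10 := by
  simp only [WeierstrassCurve.Affine.equation_iff, X015]
  constructor <;> intro h <;> linarith

instance : X015.IsElliptic :=
  ⟨by norm_num [WeierstrassCurve.Δ, WeierstrassCurve.b₂, WeierstrassCurve.b₄, WeierstrassCurve.b₆,
    WeierstrassCurve.b₈, X015]⟩

/-- `q = 2(2y + x + 1)/(4x + 13)` is a square root of the abscissa of the image of `(x, y)` under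
the `2`-isogeny to `Y² = X(X + 1)(X + 16)` with kernel generated by `(-13/4, 9/8)`. -/
theorem abscissa_eq_of_equation {x y : ℚ} (h : X015.toAffine.Equation x y) :
    x = -13 / 4 ∨ x = -1 ∨ x = 3 ∨ x = -2 ∨ x = 8 := by
  rw [equation_iff] at h
  rcases eq_or_ne (4 * x + 13) 0 with hx | hx
  · exact Or.inl (by linarith)
  set q := 2 * (2 * y + x + 1) / (4 * x + 13) with hq
  have hq_sq : q ^ 2 = 4 * (x + 1) * (x - 3) / (4 * x + 13) := by
    rw [hq, div_pow, div_eq_div_iff (pow_ne_zero 2 hx) hx]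
    linear_combination 16 * (4 * x + 13) * h
  have hquartic : (q ^ 2 + 1) * (q ^ 2 + 16) =
      ((2 * x - 1) * (2 * x + 14) / (4 * x + 13)) ^ 2 := by
    rw [hq_sq]
    field_simp
    ring
  rcases eq_zero_or_sq_eq_four_of_mul_eq_sq hquartic with hq₀ | hq₄
  · have hroots : (x + 1) * (x - 3) = 0 := by
      rw [hq₀] at hq_sq
      field_simp at hq_sq
      linarith
    rcases mul_eq_zero.1 hroots with hx | hx
    exacts [Or.inr (Or.inl (by linarith)), Or.inr (Or.inr (Or.inl (by linarith)))]
  · have hroots : (x + 2) * (x - 8) = 0 := by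
      rw [hq₄, eq_div_iff hx] at hq_sq
      linarith
    rcases mul_eq_zero.1 hroots with hx | hx
    exacts [Or.inr (Or.inr (Or.inr (Or.inl (by linarith)))),
      Or.inr (Or.inr (Or.inr (Or.inr (by linarith))))]

/-- A rational point of order `4`. -/
def P : X015.toAffine.Point := .mk (x := -2) (y := 3) (equation_iff.2 (by norm_num))

/-- A rational point of order `2` that is not a multiple of `P`. -/
def Q : X015.toAffine.Point := .mk (x := -1) (y := 0) (equation_iff.2 (by norm_num))

theorem two_nsmul_P :
    2 • P = .mk (x := 3) (y := -2) (equation_iff.2 (by norm_num)) := by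
  rw [two_nsmul, P, Point.mk, Point.add_self_of_Y_ne (by norm_num [negY, X015])]
  rw [Point.mk, Point.some.injEq, slope_of_Y_ne rfl (by norm_num [negY, X015])]
  norm_num [addX, addY, negAddY, negY, X015]

theorem two_nsmul_two_nsmul_P : 2 • 2 • P = 0 := by
  rw [two_nsmul_P, two_nsmul, Point.mk, Point.add_self_of_Y_eq (by norm_num [negY, X015])]

theorem two_nsmul_Q : 2 • Q = 0 := by
  rw [two_nsmul, Q, Point.mk, Point.add_self_of_Y_eq (by norm_num [negY, X015])]

theorem Q_add_P : Q + P = .mk (x := 8) (y := 18) (equation_iff.2 (by norm_num)) := by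
  rw [Q, P, Point.mk, Point.mk, Point.add_of_X_ne (by norm_num)]
  rw [Point.mk, Point.some.injEq, slope_of_X_ne (by norm_num)]
  norm_num [addX, addY, negAddY, negY, X015]

theorem Q_add_two_nsmul_P :
    Q + 2 • P = .mk (x := -13 / 4) (y := 9 / 8) (equation_iff.2 (by norm_num)) := by
  rw [two_nsmul_P, Q, Point.mk, Point.mk, Point.add_of_X_ne (by norm_num)]
  rw [Point.mk, Point.some.injEq, slope_of_X_ne (by norm_num)]
  norm_num [addX, addY, negAddY, negY, X015]

theorem addOrderOf_P : addOrderOf P = 4 := by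
  refine addOrderOf_eq_prime_pow (p := 2) (n := 1) ?_ ?_
  · rw [pow_one, two_nsmul_P]
    exact Point.some_ne_zero _
  · rw [sq, mul_nsmul, two_nsmul_two_nsmul_P]

theorem addOrderOf_Q : addOrderOf Q = 2 :=
  addOrderOf_eq_prime two_nsmul_Q (Point.some_ne_zero _)

theorem Q_notMem_zmultiples_P : Q ∉ AddSubgroup.zmultiples P := by
  have hfin : IsOfFinAddOrder P := addOrderOf_pos_iff.1 (by rw [addOrderOf_P]; norm_num)
  rw [hfin.mem_zmultiples_iff_mem_range_addOrderOf, addOrderOf_P, Finset.mem_image]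
  rintro ⟨i, hi, hiQ⟩
  have hdvd : 4 ∣ i * 2 := by
    rw [← addOrderOf_P, addOrderOf_dvd_iff_nsmul_eq_zero, mul_nsmul, hiQ, two_nsmul_Q]
  obtain rfl | rfl : i = 0 ∨ i = 2 := by
    have := Finset.mem_range.1 hi
    omega
  · exact Point.some_ne_zero _ ((zero_nsmul P).symm.trans hiQ).symm
  · rw [two_nsmul_P, Q, Point.mk, Point.mk, Point.some.injEq] at hiQ
    norm_num at hiQ

theorem zmultiples_sup_zmultiples_eq_top :
    AddSubgroup.zmultiples Q ⊔ AddSubgroup.zmultiples P = ⊤ := by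
  set H := AddSubgroup.zmultiples Q ⊔ AddSubgroup.zmultiples P
  have hQ : Q ∈ H := AddSubgroup.mem_sup_left (AddSubgroup.mem_zmultiples Q)
  have hP : P ∈ H := AddSubgroup.mem_sup_right (AddSubgroup.mem_zmultiples P)
  have h2P : 2 • P ∈ H := H.nsmul_mem hP 2
  refine (AddSubgroup.eq_top_iff' H).2 fun R ↦ ?_
  rcases R with _ | ⟨x, y, h⟩
  · exact H.zero_mem
  · rcases abscissa_eq_of_equation h.1 with rfl | rfl | rfl | rfl | rfl
    · exact some_mem_of_some_mem (Q_add_two_nsmul_P ▸ H.add_mem hQ h2P)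
    · exact some_mem_of_some_mem hQ
    · exact some_mem_of_some_mem (two_nsmul_P ▸ h2P)
    · exact some_mem_of_some_mem hP
    · exact some_mem_of_some_mem (Q_add_P ▸ H.add_mem hQ hP)

end X015

/-- The Mordell–Weil group `X₀(15)(ℚ)` is isomorphic to `ℤ/2ℤ × ℤ/4ℤ`. -/
theorem mordellWeil_X015_rat :
    Nonempty (X015.toAffine.Point ≃+ (ZMod 2 × ZMod 4)) := by
  have hdisj := disjoint_zmultiples_of_notMem (X015.addOrderOf_Q ▸ Nat.prime_two)
    X015.Q_notMem_zmultiples_P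
  have h := nonempty_addEquiv_zmod_prod_zmod hdisj X015.zmultiples_sup_zmultiples_eq_top
  rwa [X015.addOrderOf_Q, X015.addOrderOf_P] at h
end

section
/- The Mordell–Weil group X₀(21)(ℚ) of ℚ-rational points of the elliptic curve X₀(21) is isomorphic, as an abelian group, to (ℤ/2ℤ) × (ℤ/4ℤ). -/
/-- `X₀(21)`: the elliptic curve over `ℚ` with Cremona label 21A1, given by the Weierstrass
equation `y² + xy = x³ − 4x − 1`. -/
def X021 : WeierstrassCurve ℚ := ⟨1, 0, 0, -4, -1⟩

/-!
Setting `t = 2 (2 y + x) / (4 x + 1)` turns `X₀(21)` into `w² = t⁴ + t² + 16`, whose eight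
rational points are the two at infinity and those with `t = 0` and `t = ±2`. In homogeneous form
`N² = a⁴ + a² b² + 16 b⁴` with `a` odd, Fermat descent forces `b = 0`: here `b = 2 k`, and
`N² - (a² + 2 k²)² = 252 k⁴` leads, after excluding the other factorisations modulo 8, to coprime
`s`, `r` with `0 < |r| ≤ |k|` for which `s² - 9 r²` and `s² + 7 r²` are both squares. Their square
roots then yield a solution with `a` odd and `b` replaced by `r`. Solutions with `a` even are moved
to odd ones by torsion translations.

The eight points are the multiples and sums of `(-2, 1)` and `(-1, 2)`.
-/

lemma exists_eq_gcd_mul_sq {a b c : ℤ} (ha : 0 ≤ a) (h : a * b = c ^ 2) :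
    ∃ x : ℤ, a = Int.gcd a b * x ^ 2 := by
  rcases (Int.gcd a b).eq_zero_or_pos with hd | hd
  · exact ⟨0, by simp [(Int.gcd_eq_zero_iff.1 hd).1]⟩
  obtain ⟨g, m, n, hg, hmn, ham, hbn⟩ := Int.exists_gcd_one' hd
  have hgcd : Int.gcd a b = g := by
    rw [ham, hbn, Int.gcd_mul_right, hmn, one_mul, Int.natAbs_natCast]
  have hg' : (0 : ℤ) < g := by exact_mod_cast hg
  obtain ⟨e, rfl⟩ : (g : ℤ) ∣ c := by
    rw [← Int.pow_dvd_pow_iff two_ne_zero, ← h, ham, hbn]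
    exact ⟨m * n, by ring⟩
  have hmn_sq : m * n = e ^ 2 := by
    apply mul_left_cancel₀ (pow_ne_zero 2 hg'.ne')
    rw [← mul_pow, ← h, ham, hbn]
    ring
  obtain ⟨x, hx | hx⟩ := Int.sq_of_gcd_eq_one hmn hmn_sq
  · exact ⟨x, by rw [hgcd, ham, hx, mul_comm]⟩
  · have hm : 0 ≤ m := nonneg_of_mul_nonneg_left (ham ▸ ha) hg'
    exact ⟨0, by rw [ham, show m = 0 by nlinarith]; simp⟩

lemma isSquare_of_sq_mul {a c : ℤ} (hc : c ≠ 0) (h : IsSquare (c ^ 2 * a)) : IsSquare a := by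
  obtain ⟨n, hn⟩ := h
  obtain ⟨m, rfl⟩ : c ∣ n := by
    rw [← Int.pow_dvd_pow_iff two_ne_zero]
    exact ⟨a, by rw [hn, sq n]⟩
  exact ⟨m, mul_left_cancel₀ (pow_ne_zero 2 hc) (by linear_combination hn)⟩

lemma odd_sq_add_mul_sq_iff {c s r : ℤ} (hc : Odd c) : Odd (s ^ 2 + c * r ^ 2) ↔ Odd (s + r) := by
  simp only [Int.odd_add, Int.odd_pow' two_ne_zero, Int.even_mul, Int.even_pow' two_ne_zero,
    Int.not_even_iff_odd.2 hc, false_or]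

/-- The homogenised right-hand side of the model `w² = t⁴ + t² + 16` of `X₀(21)`, in which
`t = 2 (2 y + x) / (4 x + 1)`. -/
def quarticForm {R : Type*} [CommRing R] (a b : R) : R := a ^ 4 + a ^ 2 * b ^ 2 + 16 * b ^ 4

lemma quarticForm_mul_mul {R : Type*} [CommRing R] (g a b : R) :
    quarticForm (g * a) (g * b) = (g ^ 2) ^ 2 * quarticForm a b := by
  simp only [quarticForm]; ring

lemma even_of_isSquare_quarticForm {a b : ℤ} (ha : Odd a) (h : IsSquare (quarticForm a b)) :
    Even b := by
  by_contra hb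
  obtain ⟨n, hn⟩ := h
  have ha4 := Int.sq_mod_four_eq_one_of_odd ha
  have hb4 := Int.sq_mod_four_eq_one_of_odd (Int.not_even_iff_odd.1 hb)
  have hn4 : n ^ 2 % 4 = 2 := by
    have hform : n ^ 2 = a ^ 2 * a ^ 2 + a ^ 2 * b ^ 2 + 4 * (4 * b ^ 4) := by
      rw [sq, ← hn, quarticForm]; ring
    rw [hform]
    simp [Int.add_emod, Int.mul_emod, ha4, hb4]
  rcases Int.even_or_odd n with hn' | hn'
  · obtain ⟨m, rfl⟩ := hn'
    have : (m + m) ^ 2 = 4 * m ^ 2 := by ring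
    omega
  · have := Int.sq_mod_four_eq_one_of_odd hn'
    omega

lemma exists_mul_eq_of_isSquare_quarticForm {a k : ℤ} (hk : k ≠ 0)
    (h : IsSquare (quarticForm a (2 * k))) :
    ∃ P Q : ℤ, 0 < P ∧ 0 < Q ∧ P * Q = 63 * k ^ 4 ∧ Q - P = a ^ 2 + 2 * k ^ 2 := by
  obtain ⟨n, hn⟩ := h
  have hn' : |n| ^ 2 = (a ^ 2 + 2 * k ^ 2) ^ 2 + 252 * k ^ 4 := by
    rw [sq_abs, sq, ← hn, quarticForm]; ring
  have hev : Even (|n| + (a ^ 2 + 2 * k ^ 2)) := by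
    have : Even (|n| ^ 2 - (a ^ 2 + 2 * k ^ 2) ^ 2) := ⟨126 * k ^ 4, by rw [hn']; ring⟩
    rw [sq_sub_sq] at this
    grind
  obtain ⟨Q, hQ⟩ := hev
  have hprod : (|n| - Q) * Q = 63 * k ^ 4 := by
    have : |n| = 2 * Q - (a ^ 2 + 2 * k ^ 2) := by linarith
    rw [this] at hn' ⊢
    linarith
  have hQpos : 0 < Q := by
    have : 0 < k ^ 2 := by positivity
    nlinarith [abs_nonneg n, sq_nonneg a]
  refine ⟨|n| - Q, Q, ?_, hQpos, hprod, by linarith⟩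
  exact pos_of_mul_pos_left (hprod ▸ by positivity) hQpos.le

lemma gcd_dvd_three_of_mul_eq {P Q a k : ℤ} (hc : IsCoprime a k) (hPQ : P * Q = 63 * k ^ 4)
    (hd : Q - P = a ^ 2 + 2 * k ^ 2) : Int.gcd P Q ∣ 3 := by
  have hP := Int.gcd_dvd_left P Q
  have hQ := Int.gcd_dvd_right P Q
  have hcop : IsCoprime (Int.gcd P Q : ℤ) k := by
    have : IsCoprime (a ^ 2 + 2 * k ^ 2) k := by
      have h := (hc.pow_left (m := 2)).add_mul_right_left (2 * k)
      rwa [show a ^ 2 + 2 * k * k = a ^ 2 + 2 * k ^ 2 by ring] at h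
    exact this.of_isCoprime_of_dvd_left (hd ▸ dvd_sub hQ hP)
  have hdvd : (Int.gcd P Q : ℤ) ^ 2 ∣ 63 := by
    refine (hcop.pow (m := 2) (n := 4)).dvd_of_dvd_mul_right ?_
    rw [← hPQ, sq]
    exact mul_dvd_mul hP hQ
  have hdvd' : Int.gcd P Q ^ 2 ∣ 63 := by exact_mod_cast hdvd
  have hle : Int.gcd P Q ≤ 7 := by nlinarith [Nat.le_of_dvd (by norm_num) hdvd']
  generalize Int.gcd P Q = g at *
  interval_cases g <;> revert hdvd' <;> decide

lemma eq_one_of_dvd_twenty_one {a k x y : ℤ} {d : ℕ} (ha : Odd a) (hd : d ∣ 21)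
    (h : 7 * (a ^ 2 + 2 * k ^ 2) = 7 * (d * x ^ 2) - d * y ^ 2) (hxy : d * (x * y) = 21 * k ^ 2) :
    d = 1 := by
  -- `21 = 5` in `ZMod 8`, so `δ = 5` is the case `d = 21`.
  have hmod : ∀ δ : ZMod 8, δ = 3 ∨ δ = 7 ∨ δ = 5 → ∀ k x y : ZMod 8,
      δ * (x * y) = 5 * k ^ 2 → 7 * (1 + 2 * k ^ 2) ≠ 7 * (δ * x ^ 2) - δ * y ^ 2 := by
    decide
  have ha8 : (a : ZMod 8) ^ 2 = 1 := by
    have := (ZMod.intCast_zmod_eq_zero_iff_dvd _ 8).2 (Int.eight_dvd_sq_sub_one_of_odd ha)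
    push_cast at this
    exact sub_eq_zero.1 this
  have hZ := congrArg (Int.cast : ℤ → ZMod 8) h
  have hxyZ := congrArg (Int.cast : ℤ → ZMod 8) hxy
  push_cast [ha8] at hZ hxyZ
  by_contra hd1
  refine hmod d ?_ k x y hxyZ hZ
  have : d ∈ Nat.divisors 21 := Nat.mem_divisors.2 ⟨hd, by norm_num⟩
  rw [show Nat.divisors 21 = {1, 3, 7, 21} by decide] at this
  simp only [Finset.mem_insert, Finset.mem_singleton, hd1, false_or] at this
  rcases this with rfl | rfl | rfl <;> decide

lemma exists_eq_sq_and_seven_mul_eq_sq {a k P Q : ℤ} (ha : Odd a) (hc : IsCoprime a k)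
    (hP : 0 < P) (hQ : 0 < Q) (hPQ : P * Q = 63 * k ^ 4) (hd : Q - P = a ^ 2 + 2 * k ^ 2) :
    ∃ x y : ℤ, Q = x ^ 2 ∧ 7 * P = y ^ 2 ∧ x * y = 21 * k ^ 2 := by
  have hprod : Q * (7 * P) = (21 * k ^ 2) ^ 2 := by linear_combination 7 * hPQ
  have hgcd : Int.gcd Q (7 * P) ∣ 21 := by
    have h7 : Int.gcd Q (7 * P) ∣ 7 * Int.gcd P Q := by
      have : Int.gcd (7 * P) (7 * Q) = 7 * Int.gcd P Q := Int.gcd_mul_left 7 P Q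
      rw [← this, Int.gcd_comm]
      exact Int.gcd_dvd_gcd_mul_left_right _ _ _
    exact h7.trans (mul_dvd_mul_left 7 (gcd_dvd_three_of_mul_eq hc hPQ hd))
  obtain ⟨x, hx⟩ := exists_eq_gcd_mul_sq hQ.le hprod
  obtain ⟨y, hy⟩ := exists_eq_gcd_mul_sq (by positivity) ((mul_comm _ _).trans hprod)
  rw [Int.gcd_comm] at hy
  generalize Int.gcd Q (7 * P) = d at *
  obtain ⟨y, hy, hxy⟩ : ∃ y : ℤ, 7 * P = d * y ^ 2 ∧ d * (x * y) = 21 * k ^ 2 := by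
    rw [hx, hy] at hprod
    have : (d * (x * y)) ^ 2 = (21 * k ^ 2) ^ 2 := by linear_combination hprod
    rcases sq_eq_sq_iff_eq_or_eq_neg.1 this with h | h
    · exact ⟨y, hy, h⟩
    · exact ⟨-y, by rw [hy, neg_sq], by linear_combination -h⟩
  obtain rfl : d = 1 := eq_one_of_dvd_twenty_one ha hgcd (by rw [← hx, ← hy, ← hd]; ring) hxy
  simp only [Nat.cast_one, one_mul] at hx hy hxy
  exact ⟨x, y, hx, hy, hxy⟩

lemma exists_isSquare_mul_of_isSquare_quarticForm {a k : ℤ} (ha : Odd a) (hc : IsCoprime a k)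
    (hk : k ≠ 0) (h : IsSquare (quarticForm a (2 * k))) :
    ∃ x y : ℤ, x * y = 21 * k ^ 2 ∧ Odd (x + y) ∧
      IsSquare ((x ^ 2 - 9 * k ^ 2) * (x ^ 2 + 7 * k ^ 2)) := by
  obtain ⟨P, Q, hP, hQ, hPQ, hd⟩ := exists_mul_eq_of_isSquare_quarticForm hk h
  obtain ⟨x, y, rfl, hy, hxy⟩ := exists_eq_sq_and_seven_mul_eq_sq ha hc hP hQ hPQ hd
  refine ⟨x, y, hxy, ?_, a * x, ?_⟩
  · rw [add_comm, ← odd_sq_add_mul_sq_iff (c := -7) (by decide)]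
    rw [show y ^ 2 + -7 * x ^ 2 = -7 * (a ^ 2 + 2 * k ^ 2) by rw [← hd, ← hy]; ring]
    exact (by decide : Odd (-7 : ℤ)).mul (ha.pow.add_even (even_two_mul _))
  · linear_combination x ^ 2 * hd + hPQ

lemma exists_isCoprime_isSquare_mul {k x y : ℤ} (hk : k ≠ 0) (hxy : x * y = 21 * k ^ 2)
    (hodd : Odd (x + y)) (h : IsSquare ((x ^ 2 - 9 * k ^ 2) * (x ^ 2 + 7 * k ^ 2))) :
    ∃ s r : ℤ, IsCoprime s r ∧ r ≠ 0 ∧ |r| ≤ |k| ∧ Odd (s + r) ∧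
      IsSquare ((s ^ 2 - 9 * r ^ 2) * (s ^ 2 + 7 * r ^ 2)) := by
  obtain ⟨g, s, r, hg, hsr, rfl, rfl⟩ := Int.exists_gcd_one' (Int.gcd_pos_of_ne_zero_right x hk)
  have hg' : (g : ℤ) ≠ 0 := by exact_mod_cast hg.ne'
  have hcop := Int.isCoprime_iff_gcd_eq_one.2 hsr
  have hsy : s * y = 21 * r ^ 2 * g := mul_right_cancel₀ hg' (by linear_combination hxy)
  refine ⟨s, r, hcop, left_ne_zero_of_mul hk, ?_, ?_, ?_⟩
  · rw [abs_mul]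
    exact le_mul_of_one_le_right (abs_nonneg r) (Int.one_le_abs hg')
  · have hnot : ¬(Even s ∧ Even r) := fun ⟨hs, hr⟩ =>
      absurd (hcop.isUnit_of_dvd' hs.two_dvd hr.two_dvd) (by decide)
    have hparity := congrArg Even hsy
    simp only [eq_iff_iff, Int.even_mul, Int.even_pow' two_ne_zero,
      (by decide : ¬Even (21 : ℤ)), false_or] at hparity
    simp only [← Int.not_even_iff_odd, Int.even_add, Int.even_mul] at hodd ⊢
    tauto
  · apply isSquare_of_sq_mul (pow_ne_zero 2 hg')
    convert h using 1
    ring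

lemma isSquare_and_isSquare_of_isSquare_mul {s r : ℤ} (hc : IsCoprime s r) (hodd : Odd (s + r))
    (h : IsSquare ((s ^ 2 - 9 * r ^ 2) * (s ^ 2 + 7 * r ^ 2))) :
    IsSquare (s ^ 2 - 9 * r ^ 2) ∧ IsSquare (s ^ 2 + 7 * r ^ 2) := by
  have hB : 0 < s ^ 2 + 7 * r ^ 2 := by
    have : s ≠ 0 ∨ r ≠ 0 := by
      by_contra! h0
      simp [h0.1, h0.2] at hodd
    rcases this with h0 | h0 <;> positivity
  have hA : 0 ≤ s ^ 2 - 9 * r ^ 2 := nonneg_of_mul_nonneg_left h.nonneg hB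
  have hAodd : Odd (s ^ 2 - 9 * r ^ 2) := by
    rw [sub_eq_add_neg, ← neg_mul]
    exact (odd_sq_add_mul_sq_iff (by decide)).2 hodd
  have hcop : IsCoprime (s ^ 2 - 9 * r ^ 2) (s ^ 2 + 7 * r ^ 2) := by
    have h2 : IsCoprime (s ^ 2 - 9 * r ^ 2) 2 := Int.isCoprime_two_right.2 hAodd
    have hr : IsCoprime (s ^ 2 - 9 * r ^ 2) (r ^ 2) := by
      have := (hc.pow (m := 2) (n := 2)).add_mul_right_left (-9)
      rwa [show s ^ 2 + -9 * r ^ 2 = s ^ 2 - 9 * r ^ 2 by ring] at this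
    have := ((h2.pow_right (n := 4)).mul_right hr).add_mul_left_right 1
    rwa [show 2 ^ 4 * r ^ 2 + (s ^ 2 - 9 * r ^ 2) * 1 = s ^ 2 + 7 * r ^ 2 by ring] at this
  obtain ⟨n, hn⟩ := h
  rw [← sq] at hn
  constructor
  · obtain ⟨p, hp⟩ := exists_eq_gcd_mul_sq hA hn
    rw [Int.isCoprime_iff_gcd_eq_one.1 hcop, Nat.cast_one, one_mul] at hp
    exact ⟨p, hp.trans (sq p)⟩
  · obtain ⟨q, hq⟩ := exists_eq_gcd_mul_sq hB.le ((mul_comm _ _).trans hn)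
    rw [Int.isCoprime_iff_gcd_eq_one.1 hcop.symm, Nat.cast_one, one_mul] at hq
    exact ⟨q, hq.trans (sq q)⟩

lemma exists_odd_isSquare_quarticForm {s r : ℤ} (hodd : Odd (s + r))
    (hp : IsSquare (s ^ 2 - 9 * r ^ 2)) (hq : IsSquare (s ^ 2 + 7 * r ^ 2)) :
    ∃ a : ℤ, Odd a ∧ IsSquare (quarticForm a r) := by
  obtain ⟨p, hp⟩ := hp
  obtain ⟨q, hq⟩ := hq
  have hpodd : Odd p := by
    have : Odd (s ^ 2 + -9 * r ^ 2) := (odd_sq_add_mul_sq_iff (by decide)).2 hodd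
    rw [neg_mul, ← sub_eq_add_neg, hp] at this
    exact (Int.odd_mul.1 this).1
  have hqodd : Odd q := by
    have : Odd (s ^ 2 + 7 * r ^ 2) := (odd_sq_add_mul_sq_iff (by decide)).2 hodd
    rw [hq] at this
    exact (Int.odd_mul.1 this).1
  obtain ⟨u, hu⟩ : ∃ u, q - p = 2 * u := (hqodd.sub_odd hpodd).two_dvd
  obtain ⟨v, hv⟩ : ∃ v, q + p = 2 * v := (hqodd.add_odd hpodd).two_dvd
  obtain rfl : q = u + v := by linarith
  obtain rfl : p = v - u := by linarith
  have huv : u * v = 4 * r ^ 2 := by linarith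
  have hs : s ^ 2 = u ^ 2 + v ^ 2 + r ^ 2 := by linarith
  rcases Int.even_or_odd u with hu' | hu'
  · refine ⟨v, by grind, v * s, ?_⟩
    rw [quarticForm]
    linear_combination -v ^ 2 * hs - (u * v + 4 * r ^ 2) * huv
  · refine ⟨u, hu', u * s, ?_⟩
    rw [quarticForm]
    linear_combination -u ^ 2 * hs - (u * v + 4 * r ^ 2) * huv

lemma exists_abs_lt_isSquare_quarticForm {a b : ℤ} (hc : IsCoprime a b) (ha : Odd a) (hb : b ≠ 0)
    (h : IsSquare (quarticForm a b)) :
    ∃ a' b' : ℤ, Odd a' ∧ b' ≠ 0 ∧ |b'| < |b| ∧ IsSquare (quarticForm a' b') := by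
  obtain ⟨k, rfl⟩ := (even_of_isSquare_quarticForm ha h).two_dvd
  have hk : k ≠ 0 := right_ne_zero_of_mul hb
  obtain ⟨x, y, hxy, hodd, hsq⟩ :=
    exists_isSquare_mul_of_isSquare_quarticForm ha hc.of_mul_right_right hk h
  obtain ⟨s, r, hsr, hr, hle, hodd', hsq'⟩ := exists_isCoprime_isSquare_mul hk hxy hodd hsq
  obtain ⟨hp, hq⟩ := isSquare_and_isSquare_of_isSquare_mul hsr hodd' hsq'
  obtain ⟨a', ha', hform⟩ := exists_odd_isSquare_quarticForm hodd' hp hq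
  refine ⟨a', r, ha', hr, hle.trans_lt ?_, hform⟩
  rw [abs_mul, abs_two]
  linarith [abs_pos.2 hk]

lemma exists_isCoprime_isSquare_quarticForm {a b : ℤ} (hb : b ≠ 0)
    (h : IsSquare (quarticForm a b)) :
    ∃ a' b' g : ℤ, IsCoprime a' b' ∧ a = g * a' ∧ b = g * b' ∧ IsSquare (quarticForm a' b') := by
  obtain ⟨g, a', b', hg, hc, rfl, rfl⟩ := Int.exists_gcd_one' (Int.gcd_pos_of_ne_zero_right a hb)
  refine ⟨a', b', g, Int.isCoprime_iff_gcd_eq_one.2 hc, mul_comm _ _, mul_comm _ _, ?_⟩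
  rw [mul_comm a', mul_comm b', quarticForm_mul_mul] at h
  exact isSquare_of_sq_mul (pow_ne_zero 2 (by exact_mod_cast hg.ne')) h

theorem eq_zero_of_isSquare_quarticForm {a b : ℤ} (ha : Odd a) (h : IsSquare (quarticForm a b)) :
    b = 0 := by
  induction hn : b.natAbs using Nat.strong_induction_on generalizing a b with
  | h n ih =>
    by_contra hb
    obtain ⟨a', b', g, hc, rfl, rfl, h'⟩ := exists_isCoprime_isSquare_quarticForm hb h
    have ha' : Odd a' := (Int.odd_mul.1 ha).2
    obtain ⟨a'', b'', ha'', hb'', hlt, h''⟩ :=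
      exists_abs_lt_isSquare_quarticForm hc ha' (right_ne_zero_of_mul hb) h'
    refine hb'' (ih b''.natAbs ?_ ha'' h'' rfl)
    have hlt' : |b''| < |g * b'| := by
      rw [abs_mul]
      exact hlt.trans_le
        (le_mul_of_one_le_left (abs_nonneg b') (Int.one_le_abs (left_ne_zero_of_mul hb)))
    rw [← hn]
    zify
    exact hlt'

-- Up to sign, passing from `2 m / e` to `(n - 3 m e) / (m² - e²)` is translation by a point of
-- order four.
theorem sq_eq_sq_of_isSquare_four_mul_add {m e : ℤ} (hm : Odd m) (he : Odd e)
    (h : IsSquare (4 * m ^ 4 + m ^ 2 * e ^ 2 + 4 * e ^ 4)) : m ^ 2 = e ^ 2 := by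
  obtain ⟨n, hn⟩ := h
  have hme : Odd (3 * (m * e)) := (by decide : Odd (3 : ℤ)).mul (hm.mul he)
  have hnodd : Odd n := by
    have : Odd (4 * m ^ 4 + m ^ 2 * e ^ 2 + 4 * e ^ 4) := by
      rw [show 4 * m ^ 4 + m ^ 2 * e ^ 2 + 4 * e ^ 4 =
        (m * e) ^ 2 + 2 * (2 * m ^ 4 + 2 * e ^ 4) by ring]
      exact (hm.mul he).pow.add_even (even_two_mul _)
    exact (Int.odd_mul.1 (hn ▸ this)).1
  obtain ⟨a, ha⟩ := (hnodd.sub_odd hme).two_dvd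
  obtain ⟨c, hc⟩ := (hnodd.add_odd hme).two_dvd
  obtain ⟨b, hb⟩ := ((hm.pow (n := 2)).sub_odd (he.pow (n := 2))).two_dvd
  obtain ⟨f, hf⟩ := ((hm.pow (n := 2)).add_odd (he.pow (n := 2))).two_dvd
  have hca : c - a = 3 * (m * e) := by linarith
  have hac : a * c = 4 * b ^ 2 := by
    have : (n - 3 * (m * e)) * (n + 3 * (m * e)) = 4 * (m ^ 2 - e ^ 2) ^ 2 := by
      linear_combination -hn
    rw [ha, hc, hb] at this
    linarith
  have hsum : a ^ 2 + b ^ 2 + c ^ 2 = (3 * f) ^ 2 := by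
    have hf2 : f ^ 2 = b ^ 2 + (m * e) ^ 2 := by
      have : (2 * f) ^ 2 = (2 * b) ^ 2 + 4 * (m * e) ^ 2 := by rw [← hf, ← hb]; ring
      linarith
    linear_combination (c - a + 3 * (m * e)) * hca + 2 * hac - 9 * hf2
  suffices b = 0 by linarith
  rcases Int.even_or_odd a with ha' | ha'
  · have hc' : Odd c := by
      rw [show c = a + 3 * (m * e) by linarith]
      exact ha'.add_odd hme
    refine eq_zero_of_isSquare_quarticForm hc' ⟨c * (3 * f), ?_⟩
    rw [quarticForm]
    linear_combination c ^ 2 * hsum - (a * c + 4 * b ^ 2) * hac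
  · refine eq_zero_of_isSquare_quarticForm ha' ⟨a * (3 * f), ?_⟩
    rw [quarticForm]
    linear_combination a ^ 2 * hsum - (a * c + 4 * b ^ 2) * hac

theorem eq_zero_or_sq_eq_of_isSquare_quarticForm {a b : ℤ} (hc : IsCoprime a b) (hb : b ≠ 0)
    (h : IsSquare (quarticForm a b)) : a = 0 ∨ a ^ 2 = 4 * b ^ 2 := by
  rcases Int.even_or_odd a with ha | ha
  swap
  · exact absurd (eq_zero_of_isSquare_quarticForm ha h) hb
  obtain ⟨m, rfl⟩ := ha.two_dvd
  have hbodd : Odd b := Int.isCoprime_two_left.1 hc.of_mul_left_left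
  rcases Int.even_or_odd m with hm | hm
  · left
    obtain ⟨l, rfl⟩ := hm.two_dvd
    have : IsSquare (quarticForm b l) := by
      refine isSquare_of_sq_mul (c := 4) (by norm_num) ?_
      convert h using 1
      simp only [quarticForm]; ring
    simp [eq_zero_of_isSquare_quarticForm hbodd this]
  · right
    have : IsSquare (4 * m ^ 4 + m ^ 2 * b ^ 2 + 4 * b ^ 4) := by
      refine isSquare_of_sq_mul (c := 2) two_ne_zero ?_
      convert h using 1
      simp only [quarticForm]; ring
    rw [mul_pow, sq_eq_sq_of_isSquare_four_mul_add hm hbodd this]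
    norm_num

theorem eq_zero_or_sq_eq_four_of_isSquare_quarticForm {t : ℚ} (h : IsSquare (quarticForm t 1)) :
    t = 0 ∨ t ^ 2 = 4 := by
  have hden : (t.den : ℚ) ≠ 0 := by exact_mod_cast t.den_nz
  have hsq : IsSquare (quarticForm t.num t.den) := by
    rw [← Rat.isSquare_intCast_iff]
    have : ((quarticForm t.num t.den : ℤ) : ℚ) = (t.den ^ 2) ^ 2 * quarticForm t 1 := by
      rw [← quarticForm_mul_mul, mul_one, mul_comm, Rat.mul_den_eq_num]
      simp [quarticForm]
    rw [this]
    exact (IsSquare.sq _).mul h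
  have hcop : IsCoprime t.num t.den := Int.isCoprime_iff_gcd_eq_one.2 t.reduced
  rcases eq_zero_or_sq_eq_of_isSquare_quarticForm hcop (by exact_mod_cast t.den_nz) hsq with h0 | h4
  · exact Or.inl (Rat.num_eq_zero.1 h0)
  · right
    have : (t.num : ℚ) ^ 2 = 4 * t.den ^ 2 := by exact_mod_cast h4
    rw [← Rat.mul_den_eq_num, mul_pow] at this
    exact mul_right_cancel₀ (pow_ne_zero 2 hden) this

/-- The homomorphism `(i, j) ↦ i • a + j • b` out of `ZMod m × ZMod n`, for elements `a` and `b`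
killed by `m` and `n`. -/
def zmodProdHom {G : Type*} [AddCommGroup G] {m n : ℕ} {a b : G} (ha : m • a = 0)
    (hb : n • b = 0) : ZMod m × ZMod n →+ G :=
  (ZMod.lift m ⟨zmultiplesHom G a, by simpa using ha⟩).coprod
    (ZMod.lift n ⟨zmultiplesHom G b, by simpa using hb⟩)

lemma zmodProdHom_intCast {G : Type*} [AddCommGroup G] {m n : ℕ} {a b : G} (ha : m • a = 0)
    (hb : n • b = 0) (i j : ℤ) : zmodProdHom ha hb (i, j) = i • a + j • b := by
  simp [zmodProdHom]

lemma injective_of_map_two_torsion_ne_zero {G : Type*} [AddZeroClass G]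
    {f : ZMod 2 × ZMod 4 →+ G} (h10 : f (1, 0) ≠ 0) (h02 : f (0, 2) ≠ 0) (h12 : f (1, 2) ≠ 0) :
    Function.Injective f := by
  rw [injective_iff_map_eq_zero]
  intro z hz
  have hcases : ∀ z : ZMod 2 × ZMod 4,
      z = 0 ∨ z = (1, 0) ∨ z = (0, 2) ∨ z = (1, 2) ∨ z + z = (0, 2) := by decide
  rcases hcases z with rfl | rfl | rfl | rfl | h2
  · rfl
  · exact absurd hz h10
  · exact absurd hz h02
  · exact absurd hz h12
  · exact absurd (by rw [← h2, map_add, hz, add_zero]) h02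

namespace X021

open WeierstrassCurve

instance : X021.IsElliptic := by
  refine ⟨isUnit_iff_ne_zero.2 ?_⟩
  norm_num [X021, Δ, b₂, b₄, b₆, b₈]

lemma equation_iff (x y : ℚ) :
    X021.toAffine.Equation x y ↔ y ^ 2 + x * y = x ^ 3 - 4 * x - 1 := by
  rw [Affine.equation_iff]
  simp only [X021]
  constructor <;> intro h <;> linear_combination h

theorem x_eq_of_equation {x y : ℚ} (h : X021.toAffine.Equation x y) :
    x = 2 ∨ x = -2 ∨ x = -1 / 4 ∨ x = -1 ∨ x = 5 := by
  rw [equation_iff] at h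
  rcases eq_or_ne (4 * x + 1) 0 with hx | hx
  · exact Or.inr (Or.inr (Or.inl (by linarith)))
  obtain ⟨t, ht⟩ : ∃ t : ℚ, t * (4 * x + 1) = 2 * (2 * y + x) := ⟨_, div_mul_cancel₀ _ hx⟩
  have htx : t ^ 2 * (4 * x + 1) = 4 * (x ^ 2 - 4) := by
    apply mul_right_cancel₀ hx
    linear_combination (t * (4 * x + 1) + 2 * (2 * y + x)) * ht + 16 * h
  have hsq : IsSquare (quarticForm t 1) := by
    refine ⟨(4 * x + 1 - (1 + 2 * t ^ 2)) / 2, ?_⟩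
    rw [quarticForm]
    linear_combination htx
  rcases eq_zero_or_sq_eq_four_of_isSquare_quarticForm hsq with rfl | h4
  · have : (x - 2) * (x + 2) = 0 := by linarith
    grind
  · have : (x + 1) * (x - 5) = 0 := by rw [h4] at htx; linarith
    grind

/-- The affine rational point `(x, y)` of `X₀(21)`. -/
def point (x y : ℚ) (h : y ^ 2 + x * y = x ^ 3 - 4 * x - 1) : X021.toAffine.Point :=
  .some x y (Affine.equation_iff_nonsingular.1 ((equation_iff x y).2 h))

lemma point_ne_zero (x y : ℚ) (h : y ^ 2 + x * y = x ^ 3 - 4 * x - 1) : point x y h ≠ 0 :=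
  Affine.Point.some_ne_zero _

/-- The point `(-2, 1)` of order two. -/
def twoTorsionPoint : X021.toAffine.Point := point (-2) 1 (by norm_num)

/-- The point `(-1, 2)` of order four. -/
def fourTorsionPoint : X021.toAffine.Point := point (-1) 2 (by norm_num)

lemma fourTorsionPoint_add_self :
    fourTorsionPoint + fourTorsionPoint = point 2 (-1) (by norm_num) := by
  rw [fourTorsionPoint, point, Affine.Point.add_some (by norm_num [Affine.negY, X021]), point,
    Affine.Point.some.injEq]
  norm_num [Affine.addX, Affine.addY, Affine.negAddY, Affine.negY, Affine.slope, X021]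

lemma twoTorsionPoint_add_fourTorsionPoint :
    twoTorsionPoint + fourTorsionPoint = point 5 (-13) (by norm_num) := by
  rw [twoTorsionPoint, fourTorsionPoint, point, point,
    Affine.Point.add_some (by norm_num [X021]), point, Affine.Point.some.injEq]
  norm_num [Affine.addX, Affine.addY, Affine.negAddY, Affine.negY, Affine.slope, X021]

lemma twoTorsionPoint_add_point :
    twoTorsionPoint + point 2 (-1) (by norm_num) = point (-1 / 4) (1 / 8) (by norm_num) := by
  rw [twoTorsionPoint, point, point, Affine.Point.add_some (by norm_num [X021]), point,
    Affine.Point.some.injEq]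
  norm_num [Affine.addX, Affine.addY, Affine.negAddY, Affine.negY, Affine.slope, X021]

lemma two_nsmul_twoTorsionPoint : 2 • twoTorsionPoint = 0 := by
  rw [two_nsmul]
  exact Affine.Point.add_of_Y_eq rfl (by norm_num [Affine.negY, X021])

lemma four_nsmul_fourTorsionPoint : 4 • fourTorsionPoint = 0 := by
  rw [show 4 = 2 * 2 from rfl, mul_nsmul, two_nsmul fourTorsionPoint, fourTorsionPoint_add_self,
    two_nsmul]
  exact Affine.Point.add_of_Y_eq rfl (by norm_num [Affine.negY, X021])

/-- The homomorphism to `X₀(21)(ℚ)` sending the standard generators of `ℤ/2ℤ × ℤ/4ℤ` to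
`(-2, 1)` and `(-1, 2)`. -/
noncomputable def torsionHom : ZMod 2 × ZMod 4 →+ X021.toAffine.Point :=
  zmodProdHom two_nsmul_twoTorsionPoint four_nsmul_fourTorsionPoint

lemma torsionHom_intCast (m n : ℤ) :
    torsionHom (m, n) = m • twoTorsionPoint + n • fourTorsionPoint :=
  zmodProdHom_intCast _ _ m n

lemma torsionHom_zero_one : torsionHom (0, 1) = point (-1) 2 (by norm_num) := by
  simpa [fourTorsionPoint] using torsionHom_intCast 0 1

lemma torsionHom_zero_two : torsionHom (0, 2) = point 2 (-1) (by norm_num) := by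
  simpa [two_zsmul, fourTorsionPoint_add_self] using torsionHom_intCast 0 2

lemma torsionHom_one_zero : torsionHom (1, 0) = point (-2) 1 (by norm_num) := by
  simpa [twoTorsionPoint] using torsionHom_intCast 1 0

lemma torsionHom_one_one : torsionHom (1, 1) = point 5 (-13) (by norm_num) := by
  simpa [twoTorsionPoint_add_fourTorsionPoint] using torsionHom_intCast 1 1

lemma torsionHom_one_two : torsionHom (1, 2) = point (-1 / 4) (1 / 8) (by norm_num) := by
  simpa [two_zsmul, fourTorsionPoint_add_self, twoTorsionPoint_add_point]
    using torsionHom_intCast 1 2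

lemma torsionHom_injective : Function.Injective torsionHom := by
  apply injective_of_map_two_torsion_ne_zero
  · exact torsionHom_one_zero ▸ point_ne_zero _ _ _
  · exact torsionHom_zero_two ▸ point_ne_zero _ _ _
  · exact torsionHom_one_two ▸ point_ne_zero _ _ _

lemma exists_torsionHom_eq_of_x_eq {z : ZMod 2 × ZMod 4} {x x' y y' : ℚ}
    {h' : y' ^ 2 + x' * y' = x' ^ 3 - 4 * x' - 1}
    (hz : torsionHom z = point x' y' h') (h : X021.toAffine.Nonsingular x y) (hx : x = x') :
    ∃ w, torsionHom w = .some x y h := by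
  rcases Affine.Point.X_eq_iff.1 hx with h | h
  · exact ⟨z, hz.trans h.symm⟩
  · exact ⟨-z, by rw [map_neg, hz, h, point]⟩

lemma torsionHom_surjective : Function.Surjective torsionHom
  | 0 => ⟨0, map_zero torsionHom⟩
  | .some x y h => by
    rcases x_eq_of_equation h.1 with hx | hx | hx | hx | hx
    · exact exists_torsionHom_eq_of_x_eq torsionHom_zero_two h hx
    · exact exists_torsionHom_eq_of_x_eq torsionHom_one_zero h hx
    · exact exists_torsionHom_eq_of_x_eq torsionHom_one_two h hx
    · exact exists_torsionHom_eq_of_x_eq torsionHom_zero_one h hx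
    · exact exists_torsionHom_eq_of_x_eq torsionHom_one_one h hx

end X021

/-- The Mordell–Weil group `X₀(21)(ℚ)` is isomorphic to `ℤ/2ℤ × ℤ/4ℤ`. -/
theorem mordellWeil_X021_rat :
    Nonempty (X021.toAffine.Point ≃+ (ZMod 2 × ZMod 4)) :=
  ⟨(AddEquiv.ofBijective X021.torsionHom
    ⟨X021.torsionHom_injective, X021.torsionHom_surjective⟩).symm⟩
end
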